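/- With the notation of the 2D-to-3D lift: v' ∈ ℝ², u' symmetric trace-free 2×2, e := λ_max(v'⊗v'−u'), v̄ = (v'_1,v'_2,0), and ū the 3×3 symmetric trace-free matrix defined by ū_{ij}=u'_{ij}+(1/3)e·δ_{ij} (i,j≤2), ū_{i3}=ū_{3i}=0 for i≤2, ū_{33}=−(2/3)e. Then the 3D generalized energy density e₃(v̄,ū) := (3/2)·λ_max(v̄⊗v̄ − ū) equals the 2D generalized energy density e₂(v',u') := λ_max(v'⊗v' − u'). -/

import Mathlib

/-- The largest eigenvalue of a real symmetric (Hermitian) matrix. -/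
noncomputable def lambdaMax {d : ℕ} [NeZero d] {A : Matrix (Fin d) (Fin d) ℝ}
    (hA : A.IsHermitian) : ℝ := ⨆ i, hA.eigenvalues i

/-- The 3×3 lift of a 2×2 matrix `u` with energy density `e`. -/
noncomputable def liftMat (u : Matrix (Fin 2) (Fin 2) ℝ) (e : ℝ) : Matrix (Fin 3) (Fin 3) ℝ :=
  Matrix.of fun i j =>
    if hi : (i : ℕ) < 2 then
      if hj : (j : ℕ) < 2 then
        u ⟨i, hi⟩ ⟨j, hj⟩ + 1 / 3 * e * (if (i : ℕ) = (j : ℕ) then 1 else 0)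
      else 0
    else if (j : ℕ) < 2 then 0 else -(2 / 3) * e

/-- The lift of a planar vector to a 3-vector with vanishing third component. -/
def liftVec (v : Fin 2 → ℝ) : Fin 3 → ℝ :=
  fun i => if hi : (i : ℕ) < 2 then v ⟨i, hi⟩ else 0

/-!
In the splitting `ℝ³ = ℝ² ⊕ ℝ` the matrix `v̄ ⊗ v̄ - ū` is block diagonal, with blocks
`v' ⊗ v' - u' - (e / 3) I₂` and `(2 / 3) e`. Its spectrum is therefore that of `v' ⊗ v' - u'`
shifted by `-e / 3`, together with the point `2 e / 3`. As `e` is the largest eigenvalue of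
`v' ⊗ v' - u'`, both parts have maximum `2 e / 3`.
-/

open Matrix
open scoped Pointwise

theorem isGreatest_spectrum_lambdaMax {d : ℕ} [NeZero d] {A : Matrix (Fin d) (Fin d) ℝ}
    (hA : A.IsHermitian) : IsGreatest (spectrum ℝ A) (lambdaMax hA) := by
  rw [hA.spectrum_real_eq_range_eigenvalues]
  exact ⟨exists_eq_ciSup_of_finite, (isLUB_ciSup (Set.finite_range _).bddAbove).1⟩

theorem spectrum_fromBlocks_zero₂₁ {m n R : Type*} [Fintype m] [Fintype n] [DecidableEq m]
    [DecidableEq n] [CommRing R] (A : Matrix m m R) (B : Matrix m n R) (D : Matrix n n R) :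
    spectrum R (fromBlocks A B 0 D) = spectrum R A ∪ spectrum R D := by
  ext r
  have scalar_sub_eq : algebraMap R (Matrix (m ⊕ n) (m ⊕ n) R) r - fromBlocks A B 0 D =
      fromBlocks (algebraMap R _ r - A) (-B) 0 (algebraMap R _ r - D) := by
    simp [Algebra.algebraMap_eq_smul_one, ← fromBlocks_one, fromBlocks_smul, sub_eq_add_neg,
      fromBlocks_neg, fromBlocks_add]
  rw [Set.mem_union, spectrum.mem_iff, spectrum.mem_iff, spectrum.mem_iff, scalar_sub_eq,
    isUnit_fromBlocks_zero₂₁, not_and_or]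

theorem vecMulVec_liftVec_sub_liftMat (v : Fin 2 → ℝ) (u : Matrix (Fin 2) (Fin 2) ℝ) (e : ℝ) :
    vecMulVec (liftVec v) (liftVec v) - liftMat u e =
      reindexAlgEquiv ℝ ℝ finSumFinEquiv
        (fromBlocks (vecMulVec v v - u - algebraMap ℝ _ (e / 3)) 0 0
          (algebraMap ℝ (Matrix (Fin 1) (Fin 1) ℝ) (2 / 3 * e))) := by
  have inl_eq (i : Fin 2) : finSumFinEquiv (n := 1) (Sum.inl i) = i.castSucc := rfl
  have inr_eq (i : Fin 1) : finSumFinEquiv (m := 2) (Sum.inr i) = Fin.last 2 := by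
    fin_cases i
    rfl
  rw [← AlgEquiv.symm_apply_eq]
  ext (i | i) (j | j) <;> fin_cases i <;> fin_cases j <;>
    simp [-map_mul, inl_eq, inr_eq, liftVec, liftMat, vecMulVec_apply, algebraMap_matrix_apply] <;>
    ring

theorem spectrum_vecMulVec_liftVec_sub_liftMat (v : Fin 2 → ℝ) (u : Matrix (Fin 2) (Fin 2) ℝ)
    (e : ℝ) :
    spectrum ℝ (vecMulVec (liftVec v) (liftVec v) - liftMat u e) =
      (spectrum ℝ (vecMulVec v v - u) - {e / 3}) ∪ {2 / 3 * e} := by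
  rw [vecMulVec_liftVec_sub_liftMat, AlgEquiv.spectrum_eq, spectrum_fromBlocks_zero₂₁,
    spectrum.sub_singleton_eq, spectrum.scalar_eq]

theorem lift_energy_density_eq_general (v : Fin 2 → ℝ) (u : Matrix (Fin 2) (Fin 2) ℝ)
    (hA : (vecMulVec v v - u).IsHermitian)
    (hB : (vecMulVec (liftVec v) (liftVec v) - liftMat u (lambdaMax hA)).IsHermitian) :
    (3 : ℝ) / 2 * lambdaMax hB = lambdaMax hA := by
  set e := lambdaMax hA
  have planar_greatest : IsGreatest (spectrum ℝ (vecMulVec v v - u) - {e / 3}) (2 / 3 * e) := by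
    rw [Set.sub_singleton, show 2 / 3 * e = e - e / 3 by ring]
    exact (OrderIso.subRight (e / 3)).monotone.map_isGreatest (isGreatest_spectrum_lambdaMax hA)
  have lift_greatest := planar_greatest.union (isGreatest_singleton (a := 2 / 3 * e))
  rw [← spectrum_vecMulVec_liftVec_sub_liftMat, max_self] at lift_greatest
  rw [(isGreatest_spectrum_lambdaMax hB).unique lift_greatest]
  ring

theorem lift_energy_density_eq (v' : Fin 2 → ℝ) (u' : Matrix (Fin 2) (Fin 2) ℝ)
    (hsymm : u'.IsSymm) (htr : u'.trace = 0)
    (hA : (Matrix.vecMulVec v' v' - u').IsHermitian)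
    (hB : (Matrix.vecMulVec (liftVec v') (liftVec v') -
        liftMat u' (lambdaMax hA)).IsHermitian) :
    (3 : ℝ) / 2 * lambdaMax hB = lambdaMax hA :=
  lift_energy_density_eq_general v' u' hA hB
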